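/- Let f: ℝ^{n×n} → ℝ be differentiable and Q ∈ O(n). Then Σ_{1≤i<j≤n} ((h^{ij}_Q)'(0))² = 2 ‖ProjGrad f(Q)‖². -/

import Mathlib

open Matrix BigOperators Filter

/-- Frobenius norm of a real matrix. -/
noncomputable def frobR {n : ℕ} (A : Matrix (Fin n) (Fin n) ℝ) : ℝ :=
  Real.sqrt (∑ i, ∑ j, (A i j) ^ 2)

/-- `g` is the Euclidean gradient of `f : ℝ^{n×n} → ℝ`. -/
def IsGradR {n : ℕ} (f : Matrix (Fin n) (Fin n) ℝ → ℝ)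
    (g : Matrix (Fin n) (Fin n) ℝ → Matrix (Fin n) (Fin n) ℝ) : Prop :=
  ∀ Q H, HasDerivAt (fun t : ℝ => f (Q + t • H)) (∑ i, ∑ j, g Q i j * H i j) 0

/-- Riemannian (projected) gradient on O(n): `Q (Λ - Λᵀ)/2` with `Λ = Qᵀ ∇f(Q)`. -/
noncomputable def projGradR {n : ℕ}
    (g : Matrix (Fin n) (Fin n) ℝ → Matrix (Fin n) (Fin n) ℝ)
    (Q : Matrix (Fin n) (Fin n) ℝ) : Matrix (Fin n) (Fin n) ℝ :=
  Q * ((1 / 2 : ℝ) • (Qᵀ * g Q - (Qᵀ * g Q)ᵀ))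

/-- Givens rotation `G(i,j,θ)`: identity except `G_{ii} = G_{jj} = cos θ`,
`G_{ij} = −sin θ`, `G_{ji} = sin θ`. -/
noncomputable def givensR (n : ℕ) (i j : Fin n) (θ : ℝ) : Matrix (Fin n) (Fin n) ℝ :=
  fun a b =>
    if a = i ∧ b = i then Real.cos θ
    else if a = j ∧ b = j then Real.cos θ
    else if a = i ∧ b = j then -Real.sin θ
    else if a = j ∧ b = i then Real.sin θ
    else if a = b then 1 else 0

/-!
At `θ = 0` the curve `Q G(i,j,θ)` passes through `Q` with velocity `Q (E_{ji} − E_{ij})`, where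
`E_{ij}` are the matrix units, so with `Λ = Qᵀ ∇f(Q)` the derivative of `h^{ij}_Q` there is
`Λ_{ji} − Λ_{ij} = −2 K_{ij}`, where `K = (Λ − Λᵀ)/2`. Since `K` is skew-symmetric, its entries
above the diagonal carry half of `‖K‖²`, and `‖K‖ = ‖Q K‖` because `Q` is orthogonal.
-/

section Calculus

variable {𝕜 E F : Type*} [NontriviallyNormedField 𝕜] [NormedAddCommGroup E] [NormedSpace 𝕜 E]
  [NormedAddCommGroup F] [NormedSpace 𝕜 F]

theorem hasDerivAt_comp_of_hasLineDerivAt {f : E → F} {γ : 𝕜 → E} {γ' : E} {d : F} {t : 𝕜}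
    (hf : DifferentiableAt 𝕜 f (γ t)) (hγ : HasDerivAt γ γ' t)
    (hd : HasLineDerivAt 𝕜 f d (γ t) γ') : HasDerivAt (fun s => f (γ s)) d t := by
  rw [hd.unique (hf.hasFDerivAt.hasLineDerivAt γ')]
  exact hf.hasFDerivAt.comp_hasDerivAt t hγ

end Calculus

theorem sum_sum_eq_sum_diag_add_sum_lt {ι M : Type*} [Fintype ι] [LinearOrder ι] [AddCommMonoid M]
    (F : ι → ι → M) :
    ∑ i, ∑ j, F i j =
      ∑ i, F i i + ∑ p : ι × ι with p.1 < p.2, (F p.1 p.2 + F p.2 p.1) := by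
  have split_order (i j : ι) : F i j = (if i = j then F i j else 0) +
      ((if i < j then F i j else 0) + if j < i then F i j else 0) := by
    rcases lt_trichotomy i j with h | rfl | h
    · simp [h, h.ne, h.not_gt]
    · simp
    · simp [h, h.ne', h.not_gt]
  have swap : ∑ i, ∑ j, (if j < i then F i j else 0) = ∑ i, ∑ j, if i < j then F j i else 0 :=
    Finset.sum_comm
  calc ∑ i, ∑ j, F i j
      = ∑ i, F i i + (∑ i, ∑ j, (if i < j then F i j else 0) +
          ∑ i, ∑ j, if i < j then F j i else 0) := by
        rw [← swap]
        conv_lhs => enter [2, i, 2, j]; rw [split_order i j]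
        simp only [Finset.sum_add_distrib, Finset.sum_ite_eq, Finset.mem_univ, if_true]
    _ = ∑ i, F i i + ∑ p : ι × ι with p.1 < p.2, (F p.1 p.2 + F p.2 p.1) := by
        simp only [Finset.sum_add_distrib, Finset.sum_filter, Fintype.sum_prod_type]

theorem sum_sum_mul_eq_trace {m n R : Type*} [Fintype m] [Fintype n]
    [NonUnitalNonAssocSemiring R] (A B : Matrix m n R) :
    ∑ i, ∑ j, A i j * B i j = (Aᵀ * B).trace :=
  Finset.sum_comm

theorem transpose_smul_sub_transpose {ι R α : Type*} [Monoid R] [AddGroup α]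
    [DistribMulAction R α] (c : R) (A : Matrix ι ι α) : (c • (A - Aᵀ))ᵀ = -(c • (A - Aᵀ)) := by
  rw [transpose_smul, transpose_sub, transpose_transpose, ← smul_neg, neg_sub]

section Frobenius

variable {n : ℕ}

theorem frobR_sq (A : Matrix (Fin n) (Fin n) ℝ) : frobR A ^ 2 = ∑ i, ∑ j, A i j ^ 2 :=
  Real.sq_sqrt (by positivity)

theorem frobR_eq_sqrt_trace (A : Matrix (Fin n) (Fin n) ℝ) : frobR A = √(Aᵀ * A).trace := by
  simp only [frobR, sq, sum_sum_mul_eq_trace]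

theorem frobR_mul_of_transpose_mul_self_eq_one {Q : Matrix (Fin n) (Fin n) ℝ} (hQ : Qᵀ * Q = 1)
    (A : Matrix (Fin n) (Fin n) ℝ) : frobR (Q * A) = frobR A := by
  rw [frobR_eq_sqrt_trace, frobR_eq_sqrt_trace, transpose_mul, Matrix.mul_assoc,
    ← Matrix.mul_assoc Qᵀ, hQ, Matrix.one_mul]

theorem frobR_sq_of_transpose_eq_neg {K : Matrix (Fin n) (Fin n) ℝ} (hK : Kᵀ = -K) :
    frobR K ^ 2 = 2 * ∑ p : Fin n × Fin n with p.1 < p.2, K p.1 p.2 ^ 2 := by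
  have skew (i j : Fin n) : K j i = -K i j := congr_fun₂ hK i j
  have diag (i : Fin n) : K i i = 0 := self_eq_neg.mp (skew i i)
  have add_swap (p : Fin n × Fin n) : K p.1 p.2 ^ 2 + K p.2 p.1 ^ 2 = 2 * K p.1 p.2 ^ 2 := by
    rw [skew, neg_sq, two_mul]
  rw [frobR_sq, sum_sum_eq_sum_diag_add_sum_lt]
  simp only [diag, add_swap, zero_pow two_ne_zero, Finset.sum_const_zero, zero_add,
    Finset.mul_sum]

end Frobenius

section Givens

-- The topology of the Frobenius norm is definitionally the entrywise one, so the derivatives below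
-- do not depend on this choice of norm.
open scoped Matrix.Norms.Frobenius

variable {n : ℕ} {i j : Fin n}

theorem givensR_eq_one_add_smul_add_smul (hij : i ≠ j) (θ : ℝ) :
    givensR n i j θ = 1 + (Real.cos θ - 1) • (single i i 1 + single j j 1) +
      Real.sin θ • (single j i 1 - single i j 1) := by
  ext a b
  simp only [givensR, Matrix.add_apply, Matrix.sub_apply, Matrix.smul_apply, one_apply,
    single_apply, smul_eq_mul]
  grind

theorem givensR_zero (hij : i ≠ j) : givensR n i j 0 = 1 := by
  simp [givensR_eq_one_add_smul_add_smul hij]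

theorem hasDerivAt_givensR (hij : i ≠ j) (θ : ℝ) :
    HasDerivAt (givensR n i j)
      (-Real.sin θ • (single i i 1 + single j j 1) + Real.cos θ • (single j i 1 - single i j 1))
      θ := by
  rw [funext (givensR_eq_one_add_smul_add_smul hij)]
  exact ((((Real.hasDerivAt_cos θ).sub_const 1).smul_const _).const_add 1).add
    ((Real.hasDerivAt_sin θ).smul_const _)

theorem hasDerivAt_givensR_zero (hij : i ≠ j) :
    HasDerivAt (givensR n i j) (single j i 1 - single i j 1) 0 := by
  simpa using hasDerivAt_givensR hij 0

theorem hasDerivAt_comp_mul_givensR {f : Matrix (Fin n) (Fin n) ℝ → ℝ}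
    {G Q : Matrix (Fin n) (Fin n) ℝ} (hf : DifferentiableAt ℝ f Q)
    (hG : ∀ H, HasLineDerivAt ℝ f (∑ k, ∑ l, G k l * H k l) Q H) (hij : i ≠ j) :
    HasDerivAt (fun θ => f (Q * givensR n i j θ)) ((Qᵀ * G) j i - (Qᵀ * G) i j) 0 := by
  have base : Q * givensR n i j 0 = Q := by rw [givensR_zero hij, Matrix.mul_one]
  have slope : ∑ k, ∑ l, G k l * (Q * (single j i 1 - single i j 1) : Matrix _ _ ℝ) k l =
      (Qᵀ * G) j i - (Qᵀ * G) i j := by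
    rw [sum_sum_mul_eq_trace, ← Matrix.mul_assoc, ← transpose_transpose Q, ← transpose_mul,
      transpose_transpose, Matrix.mul_sub, trace_sub, trace_mul_single, trace_mul_single]
    simp only [MulOpposite.op_one, one_smul, transpose_apply]
  rw [← slope]
  exact hasDerivAt_comp_of_hasLineDerivAt (base.symm ▸ hf)
    ((hasDerivAt_givensR_zero hij).const_mul Q) (base.symm ▸ hG _)

end Givens

theorem sum_sq_deriv_eq_two_normsq_projGrad_general {n : ℕ}
    (f : Matrix (Fin n) (Fin n) ℝ → ℝ)
    (g : Matrix (Fin n) (Fin n) ℝ → Matrix (Fin n) (Fin n) ℝ)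
    (Q : Matrix (Fin n) (Fin n) ℝ) (hf : DifferentiableAt ℝ f Q)
    (hg : ∀ H, HasLineDerivAt ℝ f (∑ i, ∑ j, g Q i j * H i j) Q H)
    (hQ : Qᵀ * Q = 1) :
    ∑ p : Fin n × Fin n with p.1 < p.2,
        deriv (fun θ : ℝ => f (Q * givensR n p.1 p.2 θ)) 0 ^ 2 =
      2 * frobR (projGradR g Q) ^ 2 := by
  let K := (1 / 2 : ℝ) • (Qᵀ * g Q - (Qᵀ * g Q)ᵀ)
  have deriv_eq {i j : Fin n} (hij : i < j) :
      deriv (fun θ : ℝ => f (Q * givensR n i j θ)) 0 = -2 * K i j := by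
    rw [(hasDerivAt_comp_mul_givensR hf hg hij.ne).deriv]
    simp only [K, Matrix.smul_apply, Matrix.sub_apply, transpose_apply, smul_eq_mul]
    ring
  calc ∑ p : Fin n × Fin n with p.1 < p.2,
        deriv (fun θ : ℝ => f (Q * givensR n p.1 p.2 θ)) 0 ^ 2
      = ∑ p : Fin n × Fin n with p.1 < p.2, 4 * K p.1 p.2 ^ 2 :=
        Finset.sum_congr rfl fun p hp => by
          rw [deriv_eq (Finset.mem_filter.mp hp).2]; ring
    _ = 2 * frobR K ^ 2 := by
        rw [frobR_sq_of_transpose_eq_neg (transpose_smul_sub_transpose _ _), ← Finset.mul_sum]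
        ring
    _ = 2 * frobR (projGradR g Q) ^ 2 := by
        rw [projGradR, frobR_mul_of_transpose_mul_self_eq_one hQ]

/-- `Σ_{i<j} ((h^{ij}_Q)'(0))² = 2 ‖ProjGrad f(Q)‖²`, where `h^{ij}_Q(θ) = f(Q G(i,j,θ))`. -/
theorem sum_sq_deriv_eq_two_normsq_projGrad {n : ℕ}
    (f : Matrix (Fin n) (Fin n) ℝ → ℝ)
    (g : Matrix (Fin n) (Fin n) ℝ → Matrix (Fin n) (Fin n) ℝ)
    (hdiff : Differentiable ℝ (fun x : Fin n → Fin n → ℝ => f (Matrix.of x)))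
    (hg : IsGradR f g)
    (Q : Matrix (Fin n) (Fin n) ℝ) (hQ : Qᵀ * Q = 1) :
    (Finset.univ.filter (fun p : Fin n × Fin n => p.1 < p.2)).sum
        (fun p => (deriv (fun θ : ℝ => f (Q * givensR n p.1 p.2 θ)) 0) ^ 2) =
      2 * frobR (projGradR g Q) ^ 2 :=
  sum_sq_deriv_eq_two_normsq_projGrad_general f g Q (hdiff Q) (hg Q) hQ
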